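/- Let G be a finite simple graph on n ≥ 3 vertices that is a disjoint union of cycles each of odd length (equivalently, G is 2-regular and every connected component of G is a cycle with an odd number of edges). Then G is ⌈2n/3⌉-approximately magic; moreover, there exists a bijection f from the edge set of G to {1, 2, ..., n} such that every vertex sum is at least ⌈2n/3⌉ + 1 and at most 2⌈2n/3⌉ + 1. -/

import Mathlib

/-!
Let the `k` cycles have lengths `2 p_a + 1`, and put `N = ∑ p_a` and `M = ∑ (p_a + 1) = N + k`, so
that `n = N + M`. Give edge `j` of a cycle a rank between `1` and `M`, and label it `N + rank` if
`j` is even and `M + 1 - rank` if `j` is odd. Consecutive edges of a cycle then have labels adding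
up to `n + 1` plus or minus the difference of their ranks, so it suffices that consecutive ranks
differ by at most `k`, as `3 k ≤ n`. To this end order the pairs (cycle, distance to edge `0`)
lexicographically, distance first, with the cycles in increasing order when ranking the first half
of each cycle and in decreasing order when ranking the second half. The two halves meet in edge `0`,
whose even and odd labels agree because its two ranks add up to `k + 1`. The edges at positive
distance have rank above `k`, so that odd labels are at most `N` and even ones are larger. Within
one parity the ranks are distinct: an edge of the first half and one of the second half of a cycle
at the same distance from edge `0` have indices adding up to `2 p_a + 1`, and all indices at a given
distance in the same half have the same parity.
-/

/-- The vertex sum at `v` under an edge labeling `f`: the sum of the labels of all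
edges incident with `v`. -/
noncomputable def vertexSum {V : Type*} [Finite V] (G : SimpleGraph V)
    (f : Sym2 V → ℕ) (v : V) : ℕ :=
  ∑ e ∈ (G.incidenceSet v).toFinite.toFinset, f e

/-- A graph is antimagic if there is a bijection from its edge set to `{1, ..., m}`
(`m` = number of edges) such that all vertex sums are pairwise distinct. -/
def IsAntimagic {V : Type*} [Finite V] (G : SimpleGraph V) : Prop :=
  ∃ f : Sym2 V → ℕ,
    Set.BijOn f G.edgeSet (Set.Icc 1 (Nat.card G.edgeSet)) ∧
    ∀ u v : V, u ≠ v → vertexSum G f u ≠ vertexSum G f v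

section CellCount

variable {ι : Type*} [Fintype ι] [DecidableEq ι] {h : ι → ℕ} {S T : Finset ι} {a : ι} {d e : ℕ}

/-- Stack `h a` cells, on levels `0, …, h a - 1`, over every `a : ι`. `cellCount h S d` is the
number of cells that lie below level `d`, or on level `d` over an element of `S`. -/
def cellCount (h : ι → ℕ) (S : Finset ι) (d : ℕ) : ℕ :=
  ∑ a, min (h a) (d + if a ∈ S then 1 else 0)

lemma cellCount_le_sum : cellCount h S d ≤ ∑ a, h a :=
  Finset.sum_le_sum fun _ _ => min_le_left _ _

lemma cellCount_zero (hpos : ∀ a, 0 < h a) : cellCount h S 0 = S.card := by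
  have hterm (a : ι) : min (h a) (0 + if a ∈ S then 1 else 0) = if a ∈ S then 1 else 0 := by
    have := hpos a
    split_ifs <;> omega
  simp only [cellCount, hterm, Finset.sum_boole, Finset.filter_univ_mem, Nat.cast_id]

lemma cellCount_le_cellCount_succ : cellCount h S d ≤ cellCount h T (d + 1) :=
  Finset.sum_le_sum fun _ _ => by split_ifs <;> omega

lemma cellCount_succ_le_add_card : cellCount h S (d + 1) ≤ cellCount h S d + Fintype.card ι := by
  rw [Fintype.card_eq_sum_ones, cellCount, cellCount, ← Finset.sum_add_distrib]
  exact Finset.sum_le_sum fun _ _ => by omega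

lemma cellCount_le_add_card : cellCount h S d ≤ cellCount h T d + Fintype.card ι := by
  rw [Fintype.card_eq_sum_ones, cellCount, cellCount, ← Finset.sum_add_distrib]
  exact Finset.sum_le_sum fun _ _ => by split_ifs <;> omega

lemma cellCount_lt_of_level_lt (hde : d < e) (ha : a ∈ T) (he : e < h a) :
    cellCount h S d < cellCount h T e := by
  refine Finset.sum_lt_sum (fun _ _ => by split_ifs <;> omega) ⟨a, Finset.mem_univ a, ?_⟩
  rw [if_pos ha]
  split_ifs <;> omega

lemma cellCount_lt_of_subset (hST : S ⊆ T) (haS : a ∉ S) (haT : a ∈ T) (hd : d < h a) :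
    cellCount h S d < cellCount h T d := by
  refine Finset.sum_lt_sum (fun b _ => ?_) ⟨a, Finset.mem_univ a, ?_⟩
  · have := @hST b
    split_ifs <;> first | omega | tauto
  · rw [if_neg haS, if_pos haT]
    omega

lemma cellCount_pos (haS : a ∈ S) (ha : 0 < h a) : 0 < cellCount h S d := by
  refine Finset.sum_pos' (fun _ _ => Nat.zero_le _) ⟨a, Finset.mem_univ a, ?_⟩
  rw [if_pos haS]
  omega

lemma card_lt_cellCount (hpos : ∀ a, 0 < h a) (hd : 0 < d) (haS : a ∈ S) (ha : d < h a) :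
    Fintype.card ι < cellCount h S d := by
  rw [← Finset.card_univ, ← cellCount_zero hpos]
  exact cellCount_lt_of_level_lt hd haS ha

end CellCount

section EdgeLabel

/-- The distance of edge `j` from edge `0` in a cycle of length `2 * q + 1`. The index
`j = 2 * q + 1` is allowed, and stands for edge `0` again. -/
def edgeDepth (q j : ℕ) : ℕ :=
  min j (2 * q + 1 - j)

lemma edgeDepth_le (q j : ℕ) : edgeDepth q j ≤ q := by
  unfold edgeDepth
  omega

variable {ι : Type*} [Fintype ι]

lemma sum_add_one_eq_sum_add_card (p : ι → ℕ) :
    ∑ a, (p a + 1) = ∑ a, p a + Fintype.card ι := by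
  rw [Finset.sum_add_distrib, ← Fintype.card_eq_sum_ones]

lemma sum_two_mul_add_one_eq (p : ι → ℕ) :
    ∑ a, (2 * p a + 1) = ∑ a, p a + ∑ a, (p a + 1) := by
  simp only [two_mul, add_assoc, Finset.sum_add_distrib]

variable [LinearOrder ι] {p : ι → ℕ} {a b : ι} {i j : ℕ}

lemma card_filter_le_add_card_filter_ge (a : ι) :
    (Finset.univ.filter (· ≤ a)).card + (Finset.univ.filter (a ≤ ·)).card = Fintype.card ι + 1 := by
  have hunion : Finset.univ.filter (· ≤ a) ∪ Finset.univ.filter (a ≤ ·) = Finset.univ := by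
    ext b
    simpa using le_total b a
  have hinter : Finset.univ.filter (· ≤ a) ∩ Finset.univ.filter (a ≤ ·) = {a} := by
    ext b
    simp [le_antisymm_iff]
  rw [← Finset.card_union_add_card_inter, hunion, hinter, Finset.card_univ, Finset.card_singleton]

/-- The cycles compared with `a` when ranking edge `j` of the cycle `a`, which has length
`2 * p a + 1`: the ones up to `a` in the first half of the cycle, the ones from `a` on in the
second half. -/
def comparedCycles (p : ι → ℕ) (a : ι) (j : ℕ) : Finset ι :=
  if j ≤ p a then Finset.univ.filter (· ≤ a) else Finset.univ.filter (a ≤ ·)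

/-- The rank of edge `j` of the cycle `a` in the lexicographic order by depth, then cycle. -/
def edgeRank (p : ι → ℕ) (a : ι) (j : ℕ) : ℕ :=
  cellCount (fun b => p b + 1) (comparedCycles p a j) (edgeDepth (p a) j)

/-- The label of edge `j` of the cycle `a`, in a disjoint union of cycles of lengths
`2 * p b + 1`. -/
def edgeLabel (p : ι → ℕ) (a : ι) (j : ℕ) : ℕ :=
  if Even j then ∑ b, p b + edgeRank p a j else ∑ b, (p b + 1) + 1 - edgeRank p a j

lemma mem_comparedCycles_self : a ∈ comparedCycles p a j := by
  unfold comparedCycles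
  split_ifs <;> simp

lemma edgeRank_le : edgeRank p a j ≤ ∑ b, (p b + 1) :=
  cellCount_le_sum

lemma edgeRank_pos : 0 < edgeRank p a j :=
  cellCount_pos mem_comparedCycles_self (Nat.succ_pos _)

lemma card_lt_edgeRank (hj : 0 < j) (hj' : j ≤ 2 * p a) :
    Fintype.card ι < edgeRank p a j := by
  refine card_lt_cellCount (fun _ => Nat.succ_pos _) ?_ mem_comparedCycles_self
    (Nat.lt_succ_of_le (edgeDepth_le _ _))
  unfold edgeDepth
  omega

lemma edgeRank_succ_bounds (hj : j ≤ 2 * p a) :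
    edgeRank p a j ≤ edgeRank p a (j + 1) + Fintype.card ι ∧
      edgeRank p a (j + 1) ≤ edgeRank p a j + Fintype.card ι := by
  have hfirst {i : ℕ} (hi : i ≤ p a) :
      edgeRank p a i = cellCount (fun b => p b + 1) (Finset.univ.filter (· ≤ a)) i := by
    rw [edgeRank, comparedCycles, if_pos hi, edgeDepth, min_eq_left (by omega)]
  have hsecond {i : ℕ} (hi : p a < i) :
      edgeRank p a i =
        cellCount (fun b => p b + 1) (Finset.univ.filter (a ≤ ·)) (2 * p a + 1 - i) := by
    rw [edgeRank, comparedCycles, if_neg hi.not_ge, edgeDepth, min_eq_right (by omega)]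
  rcases lt_trichotomy j (p a) with hlt | rfl | hgt
  · rw [hfirst hlt.le, hfirst hlt]
    exact ⟨cellCount_le_cellCount_succ.trans (Nat.le_add_right _ _), cellCount_succ_le_add_card⟩
  · rw [hfirst le_rfl, hsecond (Nat.lt_succ_self _), show 2 * p a + 1 - (p a + 1) = p a by omega]
    exact ⟨cellCount_le_add_card, cellCount_le_add_card⟩
  · rw [hsecond hgt, hsecond (hgt.trans (Nat.lt_succ_self j)),
      show 2 * p a + 1 - j = 2 * p a + 1 - (j + 1) + 1 by omega]
    exact ⟨cellCount_succ_le_add_card, cellCount_le_cellCount_succ.trans (Nat.le_add_right _ _)⟩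

lemma eq_of_cellCount_filter_le_eq {h : ι → ℕ} {d : ℕ} (ha : d < h a) (hb : d < h b)
    (hab : cellCount h (Finset.univ.filter (· ≤ a)) d =
      cellCount h (Finset.univ.filter (· ≤ b)) d) :
    a = b := by
  by_contra hne
  wlog hlt : a < b generalizing a b
  · exact this hb ha hab.symm (Ne.symm hne) (lt_of_le_of_ne (not_lt.1 hlt) (Ne.symm hne))
  refine (cellCount_lt_of_subset (fun c hc => ?_) ?_ ?_ hb).ne hab
  · simp only [Finset.mem_filter_univ] at hc ⊢
    exact hc.trans hlt.le
  all_goals simp [hlt]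

lemma eq_and_eq_of_edgeRank_eq (hi : i ≤ 2 * p a) (hj : j ≤ 2 * p b) (hij : Even i ↔ Even j)
    (hrank : edgeRank p a i = edgeRank p b j) : a = b ∧ i = j := by
  have hdepth : edgeDepth (p a) i = edgeDepth (p b) j := by
    refine le_antisymm (le_of_not_gt fun hlt => hrank.not_gt ?_)
      (le_of_not_gt fun hlt => hrank.not_lt ?_) <;>
    exact cellCount_lt_of_level_lt hlt mem_comparedCycles_self
      (Nat.lt_succ_of_le (edgeDepth_le _ _))
  have hhalf : i ≤ p a ↔ j ≤ p b := by
    simp only [edgeDepth, Nat.even_iff] at hdepth hij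
    omega
  have hcycle : a = b := by
    have ha : edgeDepth (p b) j < p a + 1 := hdepth ▸ Nat.lt_succ_of_le (edgeDepth_le _ _)
    have hb : edgeDepth (p b) j < p b + 1 := Nat.lt_succ_of_le (edgeDepth_le _ _)
    simp only [edgeRank, comparedCycles, hhalf, hdepth] at hrank
    split_ifs at hrank
    · exact eq_of_cellCount_filter_le_eq ha hb hrank
    · exact eq_of_cellCount_filter_le_eq (ι := ιᵒᵈ) ha hb hrank
  subst hcycle
  refine ⟨rfl, ?_⟩
  simp only [edgeDepth] at hdepth
  omega

lemma eq_and_eq_of_edgeLabel_eq (hi : i ≤ 2 * p a) (hj : j ≤ 2 * p b)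
    (hlabel : edgeLabel p a i = edgeLabel p b j) : a = b ∧ i = j := by
  have odd_le {c : ι} {l : ℕ} (hl : l ≤ 2 * p c) (hodd : ¬Even l) :
      ∑ b, (p b + 1) + 1 - edgeRank p c l ≤ ∑ b, p b := by
    have := card_lt_edgeRank (Nat.not_even_iff_odd.1 hodd).pos hl
    have := sum_add_one_eq_sum_add_card p
    omega
  have hapos := edgeRank_pos (p := p) (a := a) (j := i)
  have hbpos := edgeRank_pos (p := p) (a := b) (j := j)
  have hale := edgeRank_le (p := p) (a := a) (j := i)
  have hble := edgeRank_le (p := p) (a := b) (j := j)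
  unfold edgeLabel at hlabel
  split_ifs at hlabel with hie hje hje
  · exact eq_and_eq_of_edgeRank_eq hi hj (iff_of_true hie hje) (by omega)
  · have := odd_le hj hje
    omega
  · have := odd_le hi hie
    omega
  · exact eq_and_eq_of_edgeRank_eq hi hj (iff_of_false hie hje) (by omega)

lemma edgeLabel_mem_Icc : edgeLabel p a j ∈ Set.Icc 1 (∑ b, (2 * p b + 1)) := by
  have hpos := edgeRank_pos (p := p) (a := a) (j := j)
  have hle := edgeRank_le (p := p) (a := a) (j := j)
  unfold edgeLabel
  rw [sum_two_mul_add_one_eq]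
  split_ifs <;> constructor <;> omega

lemma edgeLabel_add_edgeLabel_succ_mem_Icc (hj : j ≤ 2 * p a) :
    edgeLabel p a j + edgeLabel p a (j + 1) ∈
      Set.Icc (∑ b, (2 * p b + 1) + 1 - Fintype.card ι)
        (∑ b, (2 * p b + 1) + 1 + Fintype.card ι) := by
  obtain ⟨_, _⟩ := edgeRank_succ_bounds hj
  have hle := edgeRank_le (p := p) (a := a) (j := j)
  have hle' := edgeRank_le (p := p) (a := a) (j := j + 1)
  rw [sum_two_mul_add_one_eq]
  by_cases hpar : Even j <;> simp only [edgeLabel, hpar, Nat.even_add_one, not_true_eq_false,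
    not_false_eq_true, if_true, if_false] <;> constructor <;> omega

lemma edgeLabel_two_mul_add_one : edgeLabel p a (2 * p a + 1) = edgeLabel p a 0 := by
  have hzero : edgeRank p a 0 = (Finset.univ.filter (· ≤ a)).card := by
    simp [edgeRank, comparedCycles, edgeDepth, cellCount_zero]
  have hlast : edgeRank p a (2 * p a + 1) = (Finset.univ.filter (a ≤ ·)).card := by
    rw [edgeRank, comparedCycles, if_neg (by omega), edgeDepth, Nat.sub_self, Nat.min_zero,
      cellCount_zero fun _ => Nat.succ_pos _]
  have := card_filter_le_add_card_filter_ge a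
  have := sum_add_one_eq_sum_add_card p
  rw [edgeLabel, edgeLabel, if_neg (by simp), if_pos Even.zero, hzero, hlast]
  omega

end EdgeLabel

lemma apply_val_finRotate {α : Type*} {m : ℕ} {g : ℕ → α} (hg : g m = g 0) (i : Fin m) :
    g (finRotate m i) = g (i + 1) := by
  obtain _ | m := m
  · exact i.elim0
  rw [coe_finRotate]
  split_ifs with hi
  · rw [hi, Fin.val_last, hg]
  · rfl

lemma finRotate_finRotate_ne {m : ℕ} (hm : 3 ≤ m) (i : Fin m) :
    finRotate m (finRotate m i) ≠ i := by
  obtain ⟨m, rfl⟩ := Nat.exists_eq_add_of_le' hm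
  simp only [Ne, Fin.ext_iff, coe_finRotate, Fin.val_last]
  split_ifs <;> omega

theorem exists_labeling_finRotate {ι : Type*} [Finite ι] {m : ι → ℕ} (hm : ∀ a, Odd (m a)) :
    ∃ l : (Σ a, Fin (m a)) → ℕ, Function.Injective l ∧
      Set.range l = Set.Icc 1 (Nat.card (Σ a, Fin (m a))) ∧
      ∀ a i, l ⟨a, i⟩ + l ⟨a, finRotate (m a) i⟩ ∈
        Set.Icc (Nat.card (Σ a, Fin (m a)) + 1 - Nat.card ι)
          (Nat.card (Σ a, Fin (m a)) + 1 + Nat.card ι) := by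
  have := Fintype.ofFinite ι
  let := LinearOrder.lift' (Fintype.equivFin ι) (Fintype.equivFin ι).injective
  choose p hp using hm
  obtain rfl : m = fun a => 2 * p a + 1 := funext hp
  have hcard : Nat.card (Σ a, Fin (2 * p a + 1)) = ∑ a, (2 * p a + 1) := by
    simp
  let l : (Σ a, Fin (2 * p a + 1)) → ℕ := fun x => edgeLabel p x.1 x.2
  have hinj : Function.Injective l := by
    rintro ⟨a, i⟩ ⟨b, j⟩ hab
    obtain ⟨rfl, hij⟩ :=
      eq_and_eq_of_edgeLabel_eq (Nat.le_of_lt_succ i.isLt) (Nat.le_of_lt_succ j.isLt) hab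
    rw [Fin.ext hij]
  refine ⟨l, hinj, ?_, fun a i => ?_⟩
  · refine Set.eq_of_subset_of_ncard_le (Set.range_subset_iff.2 fun x => ?_) ?_
    · exact hcard ▸ edgeLabel_mem_Icc
    · rw [← Nat.card_coe_set_eq, ← Nat.card_coe_set_eq, Nat.card_range_of_injective hinj]
      simp
  · rw [hcard, Nat.card_eq_fintype_card]
    simp only [l, apply_val_finRotate (g := edgeLabel p a) edgeLabel_two_mul_add_one i]
    exact edgeLabel_add_edgeLabel_succ_mem_Icc (Nat.le_of_lt_succ i.isLt)

section Graph

variable {V : Type*} {G : SimpleGraph V}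

lemma exists_equiv_verts_toSubgraph {v : V} {w : G.Walk v v} (hw : w.IsCycle) :
    ∃ e : Fin w.length ≃ w.toSubgraph.verts, ∀ i, (e i : V) = w.getVert i := by
  have hpos := hw.three_le_length
  let g (i : Fin w.length) : w.toSubgraph.verts :=
    ⟨w.getVert i, w.mem_verts_toSubgraph.2 (w.getVert_mem_support i)⟩
  refine ⟨.ofBijective g ⟨fun i j hij => ?_, fun ⟨u, hu⟩ => ?_⟩, fun _ => rfl⟩
  · refine Fin.ext (hw.getVert_injOn' ?_ ?_ (congrArg Subtype.val hij)) <;>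
    exact Nat.le_sub_one_of_lt (Fin.isLt _)
  · obtain ⟨i, rfl, hi⟩ := SimpleGraph.Walk.mem_support_iff_exists_getVert.1
      (w.mem_verts_toSubgraph.1 hu)
    obtain hlt | rfl := hi.lt_or_eq
    · exact ⟨⟨i, hlt⟩, rfl⟩
    · exact ⟨⟨0, by omega⟩, Subtype.ext (by simp [g])⟩

variable [Finite V]

lemma exists_equiv_supp_adj_finRotate (hreg : ∀ v, Nat.card (G.neighborSet v) = 2)
    (c : G.ConnectedComponent) :
    ∃ e : Fin (Nat.card c.supp) ≃ c.supp, ∀ i, G.Adj (e i) (e (finRotate _ i)) := by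
  obtain ⟨v, hv⟩ := c.nonempty_supp
  have hcyc : G.IsCycles := fun u _ => hreg u
  have hne : (G.neighborSet v).Nonempty :=
    Set.nonempty_of_ncard_ne_zero ((hreg v).trans_ne two_ne_zero)
  obtain ⟨w, hw, hverts⟩ := hcyc.exists_cycle_toSubgraph_verts_eq_connectedComponentSupp hv hne
  obtain ⟨e, he⟩ := exists_equiv_verts_toSubgraph hw
  rw [← hverts, ← Nat.card_congr e, Nat.card_fin]
  refine ⟨e, fun i => ?_⟩
  rw [he, he, apply_val_finRotate (g := w.getVert) (by simp)]
  exact w.adj_getVert_succ i.isLt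

lemma exists_equiv_sigma_adj_finRotate (hreg : ∀ v, Nat.card (G.neighborSet v) = 2) :
    ∃ e : (Σ c : G.ConnectedComponent, Fin (Nat.card c.supp)) ≃ V,
      ∀ c i, G.Adj (e ⟨c, i⟩) (e ⟨c, finRotate _ i⟩) := by
  choose e he using exists_equiv_supp_adj_finRotate hreg
  exact ⟨(Equiv.sigmaCongrRight e).trans (Equiv.sigmaFiberEquiv G.connectedComponentMk), he⟩

lemma card_neighborSet_lt_card_supp (v : V) :
    Nat.card (G.neighborSet v) < Nat.card (G.connectedComponentMk v).supp := by
  refine Set.ncard_lt_ncard (Set.ssubset_iff_exists.2 ⟨fun u hu => ?_, v, rfl, G.irrefl⟩)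
  exact (SimpleGraph.ConnectedComponent.connectedComponentMk_eq_of_adj hu).symm

lemma three_le_card_supp (hreg : ∀ v, Nat.card (G.neighborSet v) = 2) (c : G.ConnectedComponent) :
    3 ≤ Nat.card c.supp := by
  obtain ⟨v, rfl⟩ := c.exists_rep
  exact (hreg v).symm.trans_lt (card_neighborSet_lt_card_supp v)

lemma mul_card_connectedComponent_le {m : ℕ}
    (hm : ∀ c : G.ConnectedComponent, m ≤ Nat.card c.supp) :
    m * Nat.card G.ConnectedComponent ≤ Nat.card V := by
  have := Fintype.ofFinite G.ConnectedComponent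
  rw [← Nat.card_congr (Equiv.sigmaFiberEquiv G.connectedComponentMk), Nat.card_sigma,
    Nat.card_eq_fintype_card, mul_comm, ← smul_eq_mul]
  exact Finset.card_nsmul_le_sum _ _ _ fun c _ => hm c

lemma vertexSum_of_neighborSet_eq_pair {u v w : V} (huw : u ≠ w)
    (hv : G.neighborSet v = {u, w}) (f : Sym2 V → ℕ) :
    vertexSum G f v = f s(u, v) + f s(v, w) := by
  classical
  have hadj (x : V) : G.Adj v x ↔ x = u ∨ x = w := Set.ext_iff.1 hv x
  have hinc : (G.incidenceSet v).toFinite.toFinset = {s(u, v), s(v, w)} := by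
    ext e
    rw [Set.Finite.mem_toFinset, Finset.mem_insert, Finset.mem_singleton]
    refine ⟨?_, ?_⟩
    · rintro ⟨he, x, rfl⟩
      obtain rfl | rfl := (hadj x).1 he
      · exact .inl Sym2.eq_swap
      · exact .inr rfl
    · rintro (rfl | rfl)
      · exact G.mk'_mem_incidenceSet_right_iff.2 ((hadj u).2 (.inl rfl)).symm
      · exact G.mk'_mem_incidenceSet_left_iff.2 ((hadj w).2 (.inr rfl))
  have hne : s(u, v) ≠ s(v, w) := by
    rw [Sym2.eq_swap, Ne, Sym2.congr_right]
    exact huw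
  rw [vertexSum, hinc, Finset.sum_pair hne]

variable {σ : Equiv.Perm V}

lemma neighborSet_eq_pair_of_adj_perm (hreg : ∀ v, Nat.card (G.neighborSet v) = 2)
    (hadj : ∀ v, G.Adj v (σ v)) (hσ : ∀ v, σ (σ v) ≠ v) (v : V) :
    G.neighborSet (σ v) = {v, σ (σ v)} := by
  refine (Set.eq_of_subset_of_ncard_le ?_ ?_).symm
  · exact Set.pair_subset (hadj v).symm (hadj (σ v))
  · rw [Set.ncard_pair (hσ v).symm]
    exact (hreg (σ v)).le

lemma exists_edgeLabeling_of_perm (hreg : ∀ v, Nat.card (G.neighborSet v) = 2)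
    (hadj : ∀ v, G.Adj v (σ v)) (hσ : ∀ v, σ (σ v) ≠ v) {l : V → ℕ} (hl : Function.Injective l) :
    ∃ f : Sym2 V → ℕ, Set.BijOn f G.edgeSet (Set.range l) ∧
      ∀ v, vertexSum G f (σ v) = l v + l (σ v) := by
  have hnbr := neighborSet_eq_pair_of_adj_perm hreg hadj hσ
  let E (v : V) : Sym2 V := s(v, σ v)
  have hE : Function.Injective E := by
    intro u v huv
    obtain ⟨h, -⟩ | ⟨rfl, h⟩ := Sym2.eq_iff.1 huv
    · exact h
    · exact (hσ v h).elim
  have hrange : Set.range E = G.edgeSet := by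
    refine (Set.range_subset_iff.2 hadj).antisymm fun e he => ?_
    induction e with | _ a b
    obtain ⟨v, rfl⟩ := σ.surjective a
    have hb : b ∈ ({v, σ (σ v)} : Set V) := hnbr v ▸ he
    obtain rfl | rfl := hb
    · exact ⟨b, Sym2.eq_swap⟩
    · exact ⟨σ v, rfl⟩
  let f := Function.extend E l 0
  have hf : f ∘ E = l := Function.extend_comp hE l 0
  have hfE (v : V) : f s(v, σ v) = l v := congrFun hf v
  refine ⟨f, ?_, fun v => ?_⟩
  · rw [← hrange, ← hf, Set.range_comp]
    exact Set.InjOn.bijOn_image (Function.Injective.injOn_range (hf ▸ hl))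
  · rw [vertexSum_of_neighborSet_eq_pair (hσ v).symm (hnbr v), hfE, hfE]

end Graph

theorem disjoint_odd_cycles_approx_magic_general {V : Type*} [Finite V] (G : SimpleGraph V)
    (hreg : ∀ v : V, Nat.card (G.neighborSet v) = 2)
    (hodd : ∀ c : G.ConnectedComponent, Odd (Nat.card c.supp)) :
    ∃ f : Sym2 V → ℕ,
      Set.BijOn f G.edgeSet (Set.Icc 1 (Nat.card V)) ∧
      ∀ v : V, vertexSum G f v ∈ Set.Icc (Nat.card V + 1 - Nat.card G.ConnectedComponent)
        (Nat.card V + 1 + Nat.card G.ConnectedComponent) := by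
  obtain ⟨e, he⟩ := exists_equiv_sigma_adj_finRotate hreg
  obtain ⟨l, hinj, hrange, hsum⟩ := exists_labeling_finRotate hodd
  rw [Nat.card_congr e] at hrange hsum
  let σ : Equiv.Perm V := e.permCongr (.sigmaCongrRight fun c => finRotate (Nat.card c.supp))
  have hσ (c) (i : Fin (Nat.card c.supp)) : σ (e ⟨c, i⟩) = e ⟨c, finRotate _ i⟩ :=
    congrArg (fun x => e (Equiv.sigmaCongrRight (fun c => finRotate _) x)) (e.symm_apply_apply _)
  have hadj (v : V) : G.Adj v (σ v) := by
    obtain ⟨⟨c, i⟩, rfl⟩ := e.surjective v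
    exact hσ c i ▸ he c i
  have hσσ (v : V) : σ (σ v) ≠ v := by
    obtain ⟨⟨c, i⟩, rfl⟩ := e.surjective v
    rw [hσ, hσ, e.injective.ne_iff]
    exact sigma_mk_injective.ne (finRotate_finRotate_ne (three_le_card_supp hreg c) i)
  obtain ⟨f, hf, hfsum⟩ := exists_edgeLabeling_of_perm hreg hadj hσσ (hinj.comp e.symm.injective)
  rw [Set.range_comp, e.symm.range_eq_univ, Set.image_univ, hrange] at hf
  refine ⟨f, hf, fun v => ?_⟩
  obtain ⟨⟨c, i⟩, rfl⟩ := (e.trans σ).surjective v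
  rw [Equiv.trans_apply, hfsum, hσ]
  simpa only [Function.comp_apply, Equiv.symm_apply_apply] using hsum c i

/-- If `G` is a disjoint union of odd cycles on `n ≥ 3` vertices (i.e. `G` is 2-regular
and every connected component has an odd number of vertices, equivalently an odd number
of edges), then there is a bijection from its edge set to `{1, ..., n}` such that every
vertex sum lies between `⌈2n/3⌉ + 1` and `2⌈2n/3⌉ + 1`; in particular `G` is
`⌈2n/3⌉`-approximately magic. -/
theorem disjoint_odd_cycles_approx_magic {V : Type} [Finite V] {n : ℕ}
    (G : SimpleGraph V) (hn : Nat.card V = n) (hn3 : 3 ≤ n)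
    (hreg : ∀ v : V, Nat.card (G.neighborSet v) = 2)
    (hodd : ∀ c : G.ConnectedComponent, Odd (Nat.card c.supp)) :
    ∃ f : Sym2 V → ℕ,
      Set.BijOn f G.edgeSet (Set.Icc 1 n) ∧
      ∀ v : V,
        vertexSum G f v ∈ Set.Icc ((2 * n + 2) / 3 + 1) (2 * ((2 * n + 2) / 3) + 1) := by
  have hcard := mul_card_connectedComponent_le (three_le_card_supp hreg)
  obtain ⟨f, hf, hsum⟩ := disjoint_odd_cycles_approx_magic_general G hreg hodd
  rw [hn] at hcard hf hsum
  exact ⟨f, hf, fun v => Set.Icc_subset_Icc (by omega) (by omega) (hsum v)⟩
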